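/- arXiv:1111.0245 — 2 statements merged into one kernel-verified Lean document; each statement's English description precedes it below -/
import Mathlib

section
/- Let P be a finite poset, let b ∈ P be a removable element covering no element of P, and let c ∈ P be the element covering b. Then (1 − x_b) · f_P = f_{P∖{b}}|_{x_c := x_b x_c} as an identity of multivariate formal power series over ℤ, where P∖{b} denotes the induced subposet of P on the complement of {b}. -/
open MvPowerSeries

open Classical in
/-- The generating function of `P`-partitions of a finite poset `P`. -/
noncomputable def pgf (α : Type*) [Fintype α] [PartialOrder α] : MvPowerSeries α ℤ :=
  fun d => if ∀ x y : α, x ≤ y → d y ≤ d x then 1 else 0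

open Classical in
/-- `f_{P∖{b}}`, regarded as a series in the variables `(x_u)_{u ∈ P}`, with the
variable `x_w` replaced by the monomial `x_b * x_w`. -/
noncomputable def delSub (α : Type*) [Fintype α] [PartialOrder α] (b w : α) :
    MvPowerSeries α ℤ :=
  fun e => if e b = e w ∧ ∀ x y : α, x ≠ b → y ≠ b → x ≤ y → e y ≤ e x then 1 else 0

/-!
Since `b` is minimal and every element strictly above `b` is at least `c`, an exponent `d` is a
`P`-partition iff its restriction to `P∖{b}` is a `P∖{b}`-partition and `d c ≤ d b`. Multiplying by
`1 - x_b` telescopes over the value `d b`, so only the exponents with `d b = d c` survive.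
-/

theorem Ioi_eq_Ici_of_forall_covBy {α : Type*} [Preorder α] [IsStronglyAtomic α] {b c : α}
    (hbc : b < c) (hc : ∀ x : α, b ⋖ x → x = c) : Set.Ioi b = Set.Ici c := by
  ext y
  refine ⟨fun hby => ?_, hbc.trans_le⟩
  obtain ⟨x, hbx, hxy⟩ := exists_covBy_le_of_lt hby
  exact hc x hbx ▸ hxy

theorem antitone_iff_of_isMin_of_Ioi_eq_Ici {α β : Type*} [PartialOrder α] [Preorder β] {b c : α}
    (hb : IsMin b) (hbc : Set.Ioi b = Set.Ici c) {f : α → β} :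
    Antitone f ↔ f c ≤ f b ∧ AntitoneOn f {b}ᶜ := by
  have lt_iff (y : α) : b < y ↔ c ≤ y := Set.ext_iff.mp hbc y
  have hlt : b < c := (lt_iff c).mpr le_rfl
  refine ⟨fun hf => ⟨hf hlt.le, hf.antitoneOn _⟩, fun ⟨hcb, hf⟩ => ?_⟩
  refine antitone_iff_forall_lt.mpr fun x y hxy => ?_
  have hy : y ≠ b := fun h => hb.not_lt (h ▸ hxy)
  obtain rfl | hx := eq_or_ne x b
  · exact (hf hlt.ne' hy ((lt_iff y).mp hxy)).trans hcb
  · exact hf hx hy hxy.le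

theorem coeff_one_sub_X_mul {σ R : Type*} [Ring R] (s : σ) (f : MvPowerSeries σ R) (d : σ →₀ ℕ) :
    coeff d ((1 - X s) * f) =
      coeff d f - if 1 ≤ d s then coeff (d - Finsupp.single s 1) f else 0 := by
  simp only [sub_mul, one_mul, map_sub, X_def, coeff_monomial_mul, Finsupp.single_le_iff]

theorem eqOn_compl_tsub_single {σ : Type*} (d : σ →₀ ℕ) (s : σ) (n : ℕ) :
    Set.EqOn (d - Finsupp.single s n : σ →₀ ℕ) d {s}ᶜ := fun t ht => by
  rw [Finsupp.tsub_apply, Finsupp.single_eq_of_ne ht, tsub_zero]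

section GeneratingFunction

variable {α : Type*} [Fintype α] [PartialOrder α]

theorem coeff_pgf (d : α →₀ ℕ) [Decidable (Antitone d)] :
    coeff d (pgf α) = if Antitone d then 1 else 0 := by
  classical
  exact if_congr Iff.rfl rfl rfl

theorem coeff_delSub (b w : α) (d : α →₀ ℕ) [Decidable (d b = d w ∧ AntitoneOn d {b}ᶜ)] :
    coeff d (delSub α b w) = if d b = d w ∧ AntitoneOn d {b}ᶜ then 1 else 0 := by
  classical
  exact if_congr (and_congr_right fun _ =>
    ⟨fun h x hx y hy => h x y hx hy, fun h _ _ hx hy => h hx hy⟩) rfl rfl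

end GeneratingFunction

/-- Deletion of a removable element `b` with `b ⋖ c` and `b` covering no element:
`(1 - x_b) f_P = f_{P∖{b}}|_{x_c := x_b x_c}`. -/
theorem deletion_bottom {α : Type*} [Fintype α] [PartialOrder α] (b c : α)
    (hnoa : ∀ x : α, ¬ x ⋖ b) (hbc : b ⋖ c) (hc : ∀ x : α, b ⋖ x → x = c) :
    (1 - X b) * pgf α = delSub α b c := by
  classical
  have hmin : IsMin b := by_contra fun h => (exists_covBy_of_wellFoundedGT h).elim hnoa
  have antitone_iff (e : α →₀ ℕ) : Antitone e ↔ e c ≤ e b ∧ AntitoneOn e {b}ᶜ :=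
    antitone_iff_of_isMin_of_Ioi_eq_Ici hmin (Ioi_eq_Ici_of_forall_covBy hbc.lt hc)
  ext d
  have antitone_tsub_iff :
      Antitone (d - Finsupp.single b 1 : α →₀ ℕ) ↔ d c ≤ d b - 1 ∧ AntitoneOn d {b}ᶜ := by
    have heq := eqOn_compl_tsub_single d b 1
    rw [antitone_iff, heq.congr_antitoneOn, heq hbc.ne', Finsupp.tsub_apply,
      Finsupp.single_eq_same]
  simp only [coeff_one_sub_X_mul, coeff_pgf, coeff_delSub, antitone_iff d, antitone_tsub_iff]
  by_cases hd : AntitoneOn d {b}ᶜ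
  · simp only [hd, and_true]
    split_ifs <;> omega
  · simp only [hd, and_false, if_false, ite_self, sub_zero]
end

section
/- Let F_n ∈ ℤ[[x₁, x₂, q]] be the generating function of Z_n-partitions of the zigzag poset Z_n, recording σ(a₁) by x₁, σ(b₁) by x₂, and all other values by q. Then (1 − x₂)(1 − x₁x₂) · F₁ = 1, and for all n ≥ 2, (1 − x₁)(1 − x₂)(1 − x₁x₂) · F_n = (1 − x₁x₂) · F_{n−1}(q x₂, q) − x₁(1 − x₂) · F_{n−1}(q x₁ x₂, q), where F_{n−1}(u, v) denotes the series obtained from F_{n−1} by substituting u for x₁ and v for x₂. -/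
open MvPowerSeries

/-- A `Z_n`-partition of the zigzag poset `Z_n`, encoded as a pair
`ab = (σa, σb) : (ℕ → ℕ) × (ℕ → ℕ)` supported on `{1, …, n}`, where
`σa i = σ(a_i)` and `σb i = σ(b_i)`: order-reversing means `σ(a_i) ≤ σ(b_i)`
for `1 ≤ i ≤ n` and `σ(a_{i+1}) ≤ σ(b_i)` for `1 ≤ i ≤ n-1`. -/
def IsZigzagPartition (n : ℕ) (ab : (ℕ → ℕ) × (ℕ → ℕ)) : Prop :=
  (∀ i, i ∉ Finset.Icc 1 n → ab.1 i = 0 ∧ ab.2 i = 0) ∧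
  (∀ i, 1 ≤ i → i ≤ n → ab.1 i ≤ ab.2 i) ∧
  (∀ i, 1 ≤ i → i + 1 ≤ n → ab.1 (i + 1) ≤ ab.2 i)

/-- `F_n ∈ ℤ[[x₁, x₂, q]]` (variables `X 0 = x₁`, `X 1 = x₂`, `X 2 = q`): the
generating function of `Z_n`-partitions recording `σ(a₁)` by `x₁`, `σ(b₁)` by
`x₂`, and all other values by `q`. -/
noncomputable def Fzig (n : ℕ) : MvPowerSeries (Fin 3) ℤ :=
  fun e => (({ab : (ℕ → ℕ) × (ℕ → ℕ) | IsZigzagPartition n ab ∧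
      ab.1 1 = e 0 ∧ ab.2 1 = e 1 ∧
      ∑ i ∈ Finset.Icc 2 n, (ab.1 i + ab.2 i) = e 2}).ncard : ℤ)

/-- `F_n(q x₂, q)`: the series obtained from `F_n` by substituting `q x₂` for
`x₁` and `q` for `x₂`.  The substitution sends `x₁^i x₂^j q^k` to
`x₂^i q^{i+j+k}`, so the coefficient at `(e₀, e₁, e₂)` is `0` unless `e₀ = 0`,
and otherwise counts the `Z_n`-partitions `σ` with `σ(a₁) = e₁` and total sum
`e₂`. -/
noncomputable def FzigS1 (n : ℕ) : MvPowerSeries (Fin 3) ℤ :=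
  fun e => if e 0 = 0 then
      (({ab : (ℕ → ℕ) × (ℕ → ℕ) | IsZigzagPartition n ab ∧ ab.1 1 = e 1 ∧
        ∑ i ∈ Finset.Icc 1 n, (ab.1 i + ab.2 i) = e 2}).ncard : ℤ)
    else 0

/-- `F_n(q x₁ x₂, q)`: the series obtained from `F_n` by substituting `q x₁ x₂`
for `x₁` and `q` for `x₂`.  The substitution sends `x₁^i x₂^j q^k` to
`x₁^i x₂^i q^{i+j+k}`, so the coefficient at `(e₀, e₁, e₂)` is `0` unless
`e₀ = e₁`, and otherwise counts the `Z_n`-partitions `σ` with `σ(a₁) = e₀` and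
total sum `e₂`. -/
noncomputable def FzigS2 (n : ℕ) : MvPowerSeries (Fin 3) ℤ :=
  fun e => if e 0 = e 1 then
      (({ab : (ℕ → ℕ) × (ℕ → ℕ) | IsZigzagPartition n ab ∧ ab.1 1 = e 0 ∧
        ∑ i ∈ Finset.Icc 1 n, (ab.1 i + ab.2 i) = e 2}).ncard : ℤ)
    else 0

/-!
For `c : ℕ → ℕ → R` let `C j k = ∑_{m ≤ j} c m k`. Summing the geometric progression
`1 + x₁ + ⋯ + x₁^j` gives

`(1 - x₁) ∑_{i ≤ j} C j k x₁^i x₂^j q^k = ∑ C j k x₂^j q^k - x₁ ∑ C j k (x₁ x₂)^j q^k`,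

and multiplying by `1 - x₂`, respectively `1 - x₁ x₂`, turns the partial sums `C` on the right back
into `c`. Deleting `a₁` and `b₁` from `Z_{n+1}` leaves a `Z_n`-partition `τ`, and the only condition
linking the two is `max (σ a₁) (τ a₁) ≤ σ b₁`; so `F_{n+1} = ∑_{i ≤ j} C j k x₁^i x₂^j q^k`, where
`c m k` counts the `Z_n`-partitions `τ` of `k` with `τ a₁ = m`. This makes the recurrence valid for
`F_{n+1}` already at `n = 0`, where both substituted series are `1`, and the formula for `F_1`
follows on cancelling `1 - x₁`.
-/

section Series

variable {R : Type*}

theorem coeff_X_mul_eq_ite {σ S : Type*} [Semiring S] (s : σ) (e : σ →₀ ℕ)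
    (φ : MvPowerSeries σ S) :
    coeff e (X s * φ) = if e s = 0 then 0 else coeff (e - Finsupp.single s 1) φ := by
  classical
  rw [X, coeff_monomial_mul, one_mul]
  simp only [Finsupp.single_le_iff, Nat.one_le_iff_ne_zero, ite_not]

/-- The series `c(x₂, q) = ∑ c m k x₂^m q^k`. -/
def axisSeries [Zero R] (c : ℕ → ℕ → R) : MvPowerSeries (Fin 3) R :=
  fun e => if e 0 = 0 then c (e 1) (e 2) else 0

/-- The series `c(x₁ x₂, q) = ∑ c m k (x₁ x₂)^m q^k`. -/
def diagonalSeries [Zero R] (c : ℕ → ℕ → R) : MvPowerSeries (Fin 3) R :=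
  fun e => if e 0 = e 1 then c (e 0) (e 2) else 0

/-- The series `∑_{i ≤ j} c j k x₁^i x₂^j q^k`. -/
def triangleSeries [Zero R] (c : ℕ → ℕ → R) : MvPowerSeries (Fin 3) R :=
  fun e => if e 0 ≤ e 1 then c (e 1) (e 2) else 0

theorem coeff_axisSeries [Semiring R] (c : ℕ → ℕ → R) (e : Fin 3 →₀ ℕ) :
    coeff e (axisSeries c) = if e 0 = 0 then c (e 1) (e 2) else 0 := rfl

theorem coeff_diagonalSeries [Semiring R] (c : ℕ → ℕ → R) (e : Fin 3 →₀ ℕ) :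
    coeff e (diagonalSeries c) = if e 0 = e 1 then c (e 0) (e 2) else 0 := rfl

theorem coeff_triangleSeries [Semiring R] (c : ℕ → ℕ → R) (e : Fin 3 →₀ ℕ) :
    coeff e (triangleSeries c) = if e 0 ≤ e 1 then c (e 1) (e 2) else 0 := rfl

/-- The partial sums `∑_{m ≤ j} c m k` of `c` in its first argument. -/
def partialSums [AddCommMonoid R] (c : ℕ → ℕ → R) (j k : ℕ) : R :=
  ∑ m ∈ Finset.range (j + 1), c m k

theorem partialSums_zero [AddCommMonoid R] (c : ℕ → ℕ → R) (k : ℕ) : partialSums c 0 k = c 0 k := by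
  simp [partialSums]

theorem partialSums_succ [AddCommMonoid R] (c : ℕ → ℕ → R) (j k : ℕ) :
    partialSums c (j + 1) k = partialSums c j k + c (j + 1) k :=
  Finset.sum_range_succ _ _

theorem one_sub_X_one_mul_axisSeries_partialSums [Ring R] (c : ℕ → ℕ → R) :
    (1 - X 1) * axisSeries (partialSums c) = axisSeries c := by
  ext e
  rw [sub_mul, one_mul, map_sub, coeff_X_mul_eq_ite]
  rcases he : e 1 with _ | j
  · simp [coeff_axisSeries, he, partialSums_zero]
  · by_cases h : e 0 = 0 <;> simp [coeff_axisSeries, he, h, partialSums_succ]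

theorem one_sub_X_mul_X_mul_diagonalSeries_partialSums [Ring R] (c : ℕ → ℕ → R) :
    (1 - X 0 * X 1) * diagonalSeries (partialSums c) = diagonalSeries c := by
  ext e
  rw [sub_mul, one_mul, mul_assoc, map_sub, coeff_X_mul_eq_ite, coeff_X_mul_eq_ite]
  rcases h₀ : e 0 with _ | i <;> rcases h₁ : e 1 with _ | j
  · simp [coeff_diagonalSeries, h₀, h₁, partialSums_zero]
  · simp [coeff_diagonalSeries, h₀, h₁]
  · simp [coeff_diagonalSeries, h₀, h₁]
  · by_cases h : i = j <;> simp [coeff_diagonalSeries, h₀, h₁, h, partialSums_succ]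

theorem one_sub_X_zero_mul_triangleSeries [Ring R] (c : ℕ → ℕ → R) :
    (1 - X 0) * triangleSeries c = axisSeries c - X 0 * diagonalSeries c := by
  ext e
  rw [sub_mul, one_mul, map_sub, map_sub, coeff_X_mul_eq_ite, coeff_X_mul_eq_ite]
  rcases he : e 0 with _ | i
  · simp [coeff_axisSeries, coeff_triangleSeries, he]
  · rcases lt_trichotomy i (e 1) with h | h | h
    · simp [coeff_axisSeries, coeff_diagonalSeries, coeff_triangleSeries, he, h.ne, h.le,
        Nat.succ_le_of_lt h]
    · simp [coeff_axisSeries, coeff_diagonalSeries, coeff_triangleSeries, he, h]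
    · simp [coeff_axisSeries, coeff_diagonalSeries, coeff_triangleSeries, he, h.ne', h.not_ge,
        (h.trans i.lt_succ_self).not_ge]

theorem triangleSeries_partialSums_recurrence [CommRing R] (c : ℕ → ℕ → R) :
    (1 - X 0) * (1 - X 1) * (1 - X 0 * X 1) * triangleSeries (partialSums c) =
      (1 - X 0 * X 1) * axisSeries c - X 0 * (1 - X 1) * diagonalSeries c := by
  rw [← one_sub_X_one_mul_axisSeries_partialSums c,
    ← one_sub_X_mul_X_mul_diagonalSeries_partialSums c]
  linear_combination (1 - X 1) * (1 - X 0 * X 1) *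
    one_sub_X_zero_mul_triangleSeries (partialSums c)

theorem one_sub_X_ne_zero {σ : Type*} [Ring R] [Nontrivial R] (s : σ) :
    (1 - X s : MvPowerSeries σ R) ≠ 0 := fun h => by
  simpa using congrArg constantCoeff h

end Series

section Prepend

variable {α : Type*} [Zero α]

/-- Inserts `x` in front of a sequence whose indexing starts at `1`; the unused entry at `0` is
set to `0`. -/
def prepend (x : α) (f : ℕ → α) : ℕ → α
  | 0 => 0
  | 1 => x
  | i + 2 => f (i + 1)

/-- Deletes the first entry of a sequence whose indexing starts at `1`; the unused entry at `0` is
set to `0`. -/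
def behead (f : ℕ → α) : ℕ → α
  | 0 => 0
  | i + 1 => f (i + 2)

theorem behead_prepend {f : ℕ → α} (hf : f 0 = 0) (x : α) : behead (prepend x f) = f := by
  funext i
  cases i with
  | zero => exact hf.symm
  | succ i => rfl

theorem prepend_behead {f : ℕ → α} (hf : f 0 = 0) : prepend (f 1) (behead f) = f := by
  funext i
  match i with
  | 0 => exact hf.symm
  | 1 => rfl
  | _ + 2 => rfl

end Prepend

theorem sum_Icc_succ_succ {M : Type*} [AddCommMonoid M] (f : ℕ → M) (a b : ℕ) :
    ∑ i ∈ Finset.Icc (a + 1) (b + 1), f i = ∑ i ∈ Finset.Icc a b, f (i + 1) := by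
  rw [← Finset.map_add_right_Icc, Finset.sum_map]
  rfl

theorem sum_Icc_two_succ_prepend (x y n : ℕ) (f g : ℕ → ℕ) :
    ∑ i ∈ Finset.Icc 2 (n + 1), (prepend x f i + prepend y g i) =
      ∑ i ∈ Finset.Icc 1 n, (f i + g i) := by
  rw [sum_Icc_succ_succ]
  refine Finset.sum_congr rfl fun i hi => ?_
  obtain ⟨i, rfl⟩ := Nat.exists_eq_add_of_le' (Finset.mem_Icc.1 hi).1
  rfl

theorem ncard_setOf_le_eq_sum {α : Type*} {s : Set α} (hs : s.Finite) (f : α → ℕ) (j : ℕ) :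
    {a ∈ s | f a ≤ j}.ncard = ∑ m ∈ Finset.range (j + 1), {a ∈ s | f a = m}.ncard := by
  have hunion : {a ∈ s | f a ≤ j} = ⋃ m ∈ Finset.range (j + 1), {a ∈ s | f a = m} := by
    ext a
    simp [and_comm]
  have hdisj : (Finset.range (j + 1) : Set ℕ).PairwiseDisjoint fun m => {a ∈ s | f a = m} :=
    fun m _ m' _ hne => Set.disjoint_left.2 fun a ha ha' => hne (ha.2.symm.trans ha'.2)
  rw [hunion, ← finsum_mem_coe_finset]
  exact (Finset.finite_toSet _).ncard_biUnion (fun m _ => hs.subset (Set.sep_subset _ _)) hdisj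

/-- The `Z_n`-partitions of `k`. -/
def zigzagPartitions (n k : ℕ) : Set ((ℕ → ℕ) × (ℕ → ℕ)) :=
  {ab | IsZigzagPartition n ab ∧ ∑ i ∈ Finset.Icc 1 n, (ab.1 i + ab.2 i) = k}

/-- The number of `Z_n`-partitions of `k` taking the value `m` at `a₁`, as an integer so that it can
serve as a coefficient. -/
noncomputable def zigzagCount (n m k : ℕ) : ℤ :=
  {ab ∈ zigzagPartitions n k | ab.1 1 = m}.ncard

theorem zigzagPartitions_finite (n k : ℕ) : (zigzagPartitions n k).Finite := by
  classical
  let s := Finset.Icc 1 n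
  refine ((Finset.HasAntidiagonal.antidiagonal k).biUnion fun p =>
    s.piAntidiag p.1 ×ˢ s.piAntidiag p.2).finite_toSet.subset ?_
  rintro ab ⟨⟨hsupp, -⟩, hsum⟩
  have ha (i : ℕ) (hi : ab.1 i ≠ 0) : i ∈ s := by_contra fun h => hi (hsupp i h).1
  have hb (i : ℕ) (hi : ab.2 i ≠ 0) : i ∈ s := by_contra fun h => hi (hsupp i h).2
  rw [Finset.sum_add_distrib] at hsum
  simp only [Finset.coe_biUnion, Set.mem_iUnion, Finset.mem_coe, Finset.mem_product,
    Finset.mem_piAntidiag, Finset.HasAntidiagonal.mem_antidiagonal]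
  exact ⟨(s.sum ab.1, s.sum ab.2), hsum, ⟨rfl, ha⟩, rfl, hb⟩

theorem IsZigzagPartition.apply_zero {n : ℕ} {ab : (ℕ → ℕ) × (ℕ → ℕ)}
    (h : IsZigzagPartition n ab) : ab.1 0 = 0 ∧ ab.2 0 = 0 :=
  h.1 0 (by simp)

theorem isZigzagPartition_prepend_iff {f g : ℕ → ℕ} (hf : f 0 = 0) (hg : g 0 = 0) (n x y : ℕ) :
    IsZigzagPartition (n + 1) (prepend x f, prepend y g) ↔
      IsZigzagPartition n (f, g) ∧ x ≤ y ∧ f 1 ≤ y := by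
  constructor
  · rintro ⟨hsupp, hdiag, hoff⟩
    refine ⟨⟨fun i hi => ?_, fun i h₁ hn => ?_, fun i h₁ hn => ?_⟩, hdiag 1 le_rfl (by omega), ?_⟩
    · cases i with
      | zero => exact ⟨hf, hg⟩
      | succ i => exact hsupp (i + 2) (by simpa using hi)
    · obtain ⟨i, rfl⟩ := Nat.exists_eq_add_of_le' h₁
      exact hdiag (i + 2) (by omega) (by omega)
    · obtain ⟨i, rfl⟩ := Nat.exists_eq_add_of_le' h₁
      exact hoff (i + 2) (by omega) (by omega)
    · rcases n.eq_zero_or_pos with rfl | hn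
      · have : f 1 = 0 := (hsupp 2 (by simp)).1
        omega
      · exact hoff 1 le_rfl (by omega)
  · rintro ⟨⟨hsupp, hdiag, hoff⟩, hxy, hfy⟩
    refine ⟨fun i hi => ?_, fun i h₁ hn => ?_, fun i h₁ hn => ?_⟩
    · match i with
      | 0 => exact ⟨rfl, rfl⟩
      | 1 => simp at hi
      | i + 2 => exact hsupp (i + 1) (by simpa using hi)
    · match i with
      | 1 => exact hxy
      | i + 2 => exact hdiag (i + 1) (by omega) (by omega)
    · match i with
      | 1 => exact hfy
      | i + 2 => exact hoff (i + 1) (by omega) (by omega)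

theorem setOf_isZigzagPartition_succ_eq_image {i j : ℕ} (hij : i ≤ j) (n k : ℕ) :
    {ab | IsZigzagPartition (n + 1) ab ∧ ab.1 1 = i ∧ ab.2 1 = j ∧
        ∑ l ∈ Finset.Icc 2 (n + 1), (ab.1 l + ab.2 l) = k} =
      Prod.map (prepend i) (prepend j) '' {ab ∈ zigzagPartitions n k | ab.1 1 ≤ j} := by
  apply Set.Subset.antisymm
  · rintro ⟨a, b⟩ ⟨h, rfl, rfl, hsum⟩
    have hsplit : Prod.map (prepend (a 1)) (prepend (b 1)) (behead a, behead b) = (a, b) :=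
      Prod.ext (prepend_behead h.apply_zero.1) (prepend_behead h.apply_zero.2)
    rw [← hsplit] at h hsum
    obtain ⟨htail, -, hle⟩ := (isZigzagPartition_prepend_iff rfl rfl _ _ _).1 h
    exact ⟨_, ⟨⟨htail, (sum_Icc_two_succ_prepend _ _ _ _ _).symm.trans hsum⟩, hle⟩, hsplit⟩
  · rintro _ ⟨⟨a, b⟩, ⟨⟨h, hsum⟩, hle⟩, rfl⟩
    exact ⟨(isZigzagPartition_prepend_iff h.apply_zero.1 h.apply_zero.2 _ _ _).2 ⟨h, hij, hle⟩,
      rfl, rfl, (sum_Icc_two_succ_prepend _ _ _ _ _).trans hsum⟩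

theorem injOn_map_prepend (x y n k : ℕ) :
    Set.InjOn (Prod.map (prepend x) (prepend y)) (zigzagPartitions n k) :=
  Set.LeftInvOn.injOn (f₁' := Prod.map behead behead) fun _ h =>
    Prod.ext (behead_prepend h.1.apply_zero.1 x) (behead_prepend h.1.apply_zero.2 y)

theorem coeff_Fzig (n : ℕ) (e : Fin 3 →₀ ℕ) :
    coeff e (Fzig n) = {ab : (ℕ → ℕ) × (ℕ → ℕ) | IsZigzagPartition n ab ∧
      ab.1 1 = e 0 ∧ ab.2 1 = e 1 ∧
      ∑ i ∈ Finset.Icc 2 n, (ab.1 i + ab.2 i) = e 2}.ncard := rfl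

theorem Fzig_succ (n : ℕ) : Fzig (n + 1) = triangleSeries (partialSums (zigzagCount n)) := by
  ext e
  rw [coeff_Fzig, coeff_triangleSeries]
  split_ifs with h
  · rw [setOf_isZigzagPartition_succ_eq_image h,
      ((injOn_map_prepend _ _ _ _).mono (Set.sep_subset _ _)).ncard_image,
      ncard_setOf_le_eq_sum (zigzagPartitions_finite n (e 2)), Nat.cast_sum]
    rfl
  · refine Nat.cast_eq_zero.2 ((congrArg Set.ncard ?_).trans (Set.ncard_empty _))
    refine Set.eq_empty_of_forall_notMem ?_
    rintro ab ⟨⟨-, hdiag, -⟩, ha, hb, -⟩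
    exact h (ha ▸ hb ▸ hdiag 1 le_rfl (by omega))

theorem zigzagCount_eq_ncard (n m k : ℕ) :
    zigzagCount n m k = {ab : (ℕ → ℕ) × (ℕ → ℕ) | IsZigzagPartition n ab ∧ ab.1 1 = m ∧
      ∑ i ∈ Finset.Icc 1 n, (ab.1 i + ab.2 i) = k}.ncard :=
  congrArg (fun s : Set ((ℕ → ℕ) × (ℕ → ℕ)) => (s.ncard : ℤ))
    (Set.ext fun _ => and_right_comm.trans and_assoc)

theorem FzigS1_eq_axisSeries (n : ℕ) : FzigS1 n = axisSeries (zigzagCount n) := by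
  ext e
  rw [coeff_axisSeries, zigzagCount_eq_ncard]
  rfl

theorem FzigS2_eq_diagonalSeries (n : ℕ) : FzigS2 n = diagonalSeries (zigzagCount n) := by
  ext e
  rw [coeff_diagonalSeries, zigzagCount_eq_ncard]
  rfl

theorem Fzig_succ_recurrence (n : ℕ) :
    (1 - X 0) * (1 - X 1) * (1 - X 0 * X 1) * Fzig (n + 1) =
      (1 - X 0 * X 1) * FzigS1 n - X 0 * (1 - X 1) * FzigS2 n := by
  rw [Fzig_succ, FzigS1_eq_axisSeries, FzigS2_eq_diagonalSeries,
    triangleSeries_partialSums_recurrence]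

theorem isZigzagPartition_zero_iff {ab : (ℕ → ℕ) × (ℕ → ℕ)} :
    IsZigzagPartition 0 ab ↔ ab = 0 := by
  refine ⟨fun h => Prod.ext (funext fun i => (h.1 i (by simp)).1)
    (funext fun i => (h.1 i (by simp)).2), ?_⟩
  rintro rfl
  exact ⟨fun _ _ => ⟨rfl, rfl⟩, fun _ _ _ => le_rfl, fun _ _ _ => le_rfl⟩

theorem zigzagCount_zero (m k : ℕ) :
    zigzagCount 0 m k = if m = 0 ∧ k = 0 then 1 else 0 := by
  rw [zigzagCount_eq_ncard]
  simp only [isZigzagPartition_zero_iff]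
  split_ifs with h
  · refine Nat.cast_eq_one.2 (Set.ncard_eq_one.2 ⟨0, Set.ext fun ab => ⟨And.left, ?_⟩⟩)
    rintro rfl
    exact ⟨rfl, h.1.symm, h.2.symm⟩
  · refine Nat.cast_eq_zero.2 ((congrArg Set.ncard ?_).trans (Set.ncard_empty _))
    refine Set.eq_empty_of_forall_notMem ?_
    rintro _ ⟨rfl, hm, hk⟩
    exact h ⟨hm.symm, hk.symm⟩

theorem FzigS1_zero : FzigS1 0 = 1 := by
  ext e
  rw [FzigS1_eq_axisSeries, coeff_axisSeries, zigzagCount_zero, coeff_one]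
  simp [Finsupp.ext_iff, Fin.forall_fin_succ, ite_and]

theorem FzigS2_zero : FzigS2 0 = 1 := by
  ext e
  rw [FzigS2_eq_diagonalSeries, coeff_diagonalSeries, zigzagCount_zero, coeff_one]
  simp only [Finsupp.ext_iff, Fin.forall_fin_succ, Fin.succ_zero_eq_one, Fin.succ_one_eq_two,
    Finsupp.coe_zero, Pi.zero_apply, IsEmpty.forall_iff, and_true]
  grind

/-- The recurrence for the zigzag posets:
`(1-x₂)(1-x₁x₂) F₁ = 1` and, for `n ≥ 2`,
`(1-x₁)(1-x₂)(1-x₁x₂) F_n = (1-x₁x₂) F_{n-1}(qx₂,q) - x₁(1-x₂) F_{n-1}(qx₁x₂,q)`. -/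
theorem zigzag_recurrence :
    (1 - X 1) * (1 - X 0 * X 1) * Fzig 1 = 1 ∧
    ∀ n : ℕ, 2 ≤ n →
      (1 - X 0) * (1 - X 1) * (1 - X 0 * X 1) * Fzig n =
        (1 - X 0 * X 1) * FzigS1 (n - 1) - X 0 * (1 - X 1) * FzigS2 (n - 1) := by
  refine ⟨mul_left_cancel₀ (one_sub_X_ne_zero 0) ?_, fun n hn => ?_⟩
  · have h := Fzig_succ_recurrence 0
    rw [FzigS1_zero, FzigS2_zero] at h
    linear_combination h
  · obtain ⟨n, rfl⟩ := Nat.exists_eq_add_of_le' (one_le_two.trans hn)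
    exact Fzig_succ_recurrence n
end
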